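/- arXiv:math/0412312 — 4 statements merged into one kernel-verified Lean document; each statement's English description precedes it below -/
import Mathlib

section
/- Let u, v, w, y ∈ ℝ⁸ be linearly independent. The 4-dimensional subspace V = span_ℝ{u, v, w, y} is closed under the triple cross product (i.e. X(a,b,c) ∈ V for all a, b, c ∈ V) if and only if the 2-form η = u♭∧X(v,w,y)♭ + β(u, X(v,w,y)) + v♭∧X(w,u,y)♭ + β(v, X(w,u,y)) + w♭∧X(u,v,y)♭ + β(w, X(u,v,y)) + y♭∧X(v,u,w)♭ + β(y, X(v,u,w)) is identically zero, where for vectors a, b the 2-form β(a,b) is (x₁,x₂) ↦ Φ(a,b,x₁,x₂) and a♭ is the 1-form ⟨a,·⟩. -/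
noncomputable section

/-- ℝ⁸ with coordinates (x₁,x₂,x₃,x₄,y₁,y₂,y₃,y₄) indexed 0,…,7. -/
abbrev V8 := Fin 8 → ℝ

/-- Standard basis vector. -/
def e8 (k : Fin 8) : V8 := fun j => if j = k then 1 else 0

/-- The wedge of four coordinate 1-forms, `(e^p ∧ e^q ∧ e^r ∧ e^s)(a,b,c,d)`. -/
def form4 (p q r s : Fin 8) (a b c d : V8) : ℝ :=
  Matrix.det !![a p, a q, a r, a s; b p, b q, b r, b s;
                c p, c q, c r, c s; d p, d q, d r, d s]

/-- The Spin(7) 4-form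
Φ = e¹∧e²∧e³∧e⁴ + (e¹∧e² − e³∧e⁴)∧(f¹∧f² − f³∧f⁴)
  + (e¹∧e³ − e⁴∧e²)∧(f¹∧f³ − f⁴∧f²) + (e¹∧e⁴ − e²∧e³)∧(f¹∧f⁴ − f²∧f³)
  + f¹∧f²∧f³∧f⁴,
with e¹,…,e⁴,f¹,…,f⁴ the coordinate 1-forms indexed 0,1,2,3,4,5,6,7. -/
def Phi8 (a b c d : V8) : ℝ :=
  form4 0 1 2 3 a b c d
    + (form4 0 1 4 5 a b c d - form4 0 1 6 7 a b c d
        - form4 2 3 4 5 a b c d + form4 2 3 6 7 a b c d)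
    + (form4 0 2 4 6 a b c d - form4 0 2 7 5 a b c d
        - form4 3 1 4 6 a b c d + form4 3 1 7 5 a b c d)
    + (form4 0 3 4 7 a b c d - form4 0 3 5 6 a b c d
        - form4 1 2 4 7 a b c d + form4 1 2 5 6 a b c d)
    + form4 4 5 6 7 a b c d

/-- The triple cross product, characterized by ⟨X(u,v,w), z⟩ = Φ(u,v,w,z)
    for the standard inner product; its k-th coordinate is Φ(u,v,w,eₖ). -/
def X8 (a b c : V8) : V8 := fun k => Phi8 a b c (e8 k)

/-- The standard inner product on ℝ⁸. -/
def dot8 (a b : V8) : ℝ := ∑ k, a k * b k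

/-- The wedge a♭ ∧ b♭ of the metric duals of two vectors, as a 2-form. -/
def wedgeFlat (a b : V8) (x y : V8) : ℝ := dot8 a x * dot8 b y - dot8 a y * dot8 b x

/-- The 2-form η of Proposition `cayleyprop`:
η = u♭∧X(v,w,y)♭ + u⌟X(v,w,y)⌟Φ + v♭∧X(w,u,y)♭ + v⌟X(w,u,y)⌟Φ
  + w♭∧X(u,v,y)♭ + w⌟X(u,v,y)⌟Φ + y♭∧X(v,u,w)♭ + y⌟X(v,u,w)⌟Φ,
where β(a,b) = Φ(a,b,·,·). -/
def eta8 (u v w y : V8) (x1 x2 : V8) : ℝ :=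
  wedgeFlat u (X8 v w y) x1 x2 + Phi8 u (X8 v w y) x1 x2
    + wedgeFlat v (X8 w u y) x1 x2 + Phi8 v (X8 w u y) x1 x2
    + wedgeFlat w (X8 u v y) x1 x2 + Phi8 w (X8 u v y) x1 x2
    + wedgeFlat y (X8 v u w) x1 x2 + Phi8 y (X8 v u w) x1 x2

/-!
Let `B` have rows `u, v, w, y`, let `A` have as rows the triple products `X(v,w,y)`, `X(w,u,y)`,
`X(u,v,y)`, `X(v,u,w)`, and let `G = B Bᵀ` be the Gram matrix. Since `X` is alternating, `V` is
closed under `X` iff it contains the rows of `A`. The rows of `A` are dual to those of `B` up to a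
factor, `A Bᵀ = κ • 1` with `κ = -Φ(u,v,w,y)`, so this happens iff `G A = κ B`.

On the other hand `η = ∑ᵢ (Bᵢ♭ ∧ Aᵢ♭ + β(Bᵢ, Aᵢ))`, whose summands are alternating in `(Bᵢ, Aᵢ)`.
If `A = κ G⁻¹ B`, the sum vanishes because `G⁻¹` is symmetric. Conversely, the identity for
`X(u, v, X(u, w, y))` shows that contracting `η` with `Bᵢ` gives `-2 (G A - κ B)ᵢ♭`, so `η = 0`
forces `G A = κ B`.
-/

open Matrix

section LinearAlgebra

theorem alternatingMap_mem_of_forall_injective {R M N ι m : Type*} [CommRing R]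
    [AddCommGroup M] [Module R M] [AddCommGroup N] [Module R N] [Finite ι] [Finite m]
    (f : M [⋀^ι]→ₗ[R] N) (b : m → M) (S : Submodule R N)
    (hb : ∀ σ : ι → m, σ.Injective → f (b ∘ σ) ∈ S) (x : ι → M)
    (hx : ∀ i, x i ∈ Submodule.span R (Set.range b)) : f x ∈ S := by
  classical
  cases nonempty_fintype ι
  cases nonempty_fintype m
  simp only [Submodule.mem_span_range_iff_exists_fun] at hx
  choose c hc using hx
  have expand : f x = ∑ σ : ι → m, (∏ i, c i (σ i)) • f (b ∘ σ) := by
    rw [← funext hc]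
    refine (f.toMultilinearMap.map_sum fun i j => c i j • b j).trans ?_
    exact Finset.sum_congr rfl fun σ _ => f.map_smul_univ (fun i => c i (σ i)) (b ∘ σ)
  rw [expand]
  refine S.sum_mem fun σ _ => S.smul_mem _ ?_
  by_cases hσ : σ.Injective
  · exact hb σ hσ
  · rw [f.map_eq_zero_of_not_injective _ fun h => hσ h.of_comp]
    exact S.zero_mem

variable {m n : Type*} [Fintype m]

theorem sum_alt_mul_row_eq_zero {R : Type*} [CommRing R] [NoZeroDivisors R] [CharZero R]
    {ω : LinearMap.BilinForm R (n → R)} (hω : ω.IsAlt) {M : Matrix m m R} (hM : M.IsSymm)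
    (B : Matrix m n R) : ∑ i, ω (B.row i) ((M * B).row i) = 0 := by
  have expand : ∑ i, ω (B.row i) ((M * B).row i) =
      ∑ i, ∑ j, M i j * ω (B.row i) (B.row j) := by
    simp only [Matrix.row, Matrix.mul_apply_eq_vecMul, Matrix.vecMul_eq_sum, map_sum, map_smul,
      smul_eq_mul]
  rw [expand, ← self_eq_neg]
  calc ∑ i, ∑ j, M i j * ω (B.row i) (B.row j)
      = ∑ i, ∑ j, M j i * ω (B.row j) (B.row i) := Finset.sum_comm
    _ = -∑ i, ∑ j, M i j * ω (B.row i) (B.row j) := by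
      simp only [hM.apply, ← Finset.sum_neg_distrib, ← mul_neg, hω.neg_eq]

theorem forall_row_mem_span_iff_exists_eq_mul {R : Type*} [CommRing R] {A B : Matrix m n R} :
    (∀ i, A.row i ∈ Submodule.span R (Set.range B.row)) ↔ ∃ M : Matrix m m R, A = M * B := by
  simp only [← range_vecMulLinear, LinearMap.mem_range, Matrix.vecMulLinear_apply]
  constructor
  · intro h
    choose M hM using h
    exact ⟨M, (funext hM).symm⟩
  · rintro ⟨M, rfl⟩ i
    exact ⟨M i, rfl⟩

variable [Fintype n] {A B : Matrix m n ℝ} {κ : ℝ}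

theorem isUnit_det_mul_transpose [DecidableEq m] (hB : LinearIndependent ℝ B.row) :
    IsUnit (B * Bᵀ).det := by
  have hpos : (B * Bᴴ).PosDef :=
    Matrix.PosDef.mul_conjTranspose_self B (Matrix.vecMul_injective_iff.2 hB)
  exact isUnit_iff_ne_zero.2 (by simpa using hpos.det_pos.ne')

theorem eq_smul_inv_mul_of_gram_mul_eq [DecidableEq m] (hB : LinearIndependent ℝ B.row)
    (hA : B * Bᵀ * A = κ • B) : A = κ • (B * Bᵀ)⁻¹ * B := by
  rw [Matrix.smul_mul, ← Matrix.mul_smul, ← hA,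
    Matrix.nonsing_inv_mul_cancel_left _ _ (isUnit_det_mul_transpose hB)]

theorem forall_row_mem_span_iff_gram_mul_eq [DecidableEq m] (hB : LinearIndependent ℝ B.row)
    (hAB : A * Bᵀ = κ • (1 : Matrix m m ℝ)) :
    (∀ i, A.row i ∈ Submodule.span ℝ (Set.range B.row)) ↔ B * Bᵀ * A = κ • B := by
  rw [forall_row_mem_span_iff_exists_eq_mul]
  refine ⟨?_, fun hA => ⟨_, eq_smul_inv_mul_of_gram_mul_eq hB hA⟩⟩
  rintro ⟨M, rfl⟩
  have hG := isUnit_det_mul_transpose hB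
  have hM : M = κ • (B * Bᵀ)⁻¹ := by
    rw [Matrix.mul_assoc] at hAB
    rw [← Matrix.mul_nonsing_inv_cancel_right _ M hG, hAB, Matrix.smul_mul, Matrix.one_mul]
  rw [hM, Matrix.smul_mul, Matrix.mul_smul, Matrix.mul_nonsing_inv_cancel_left _ _ hG]

theorem sum_alt_row_eq_zero_of_gram_mul_eq (hB : LinearIndependent ℝ B.row)
    (hA : B * Bᵀ * A = κ • B) {ω : LinearMap.BilinForm ℝ (n → ℝ)} (hω : ω.IsAlt) :
    ∑ i, ω (B.row i) (A.row i) = 0 := by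
  classical
  have hsymm : (κ • (B * Bᵀ)⁻¹).IsSymm := by
    simp only [Matrix.IsSymm, transpose_smul, transpose_nonsing_inv, transpose_mul,
      transpose_transpose]
  rw [eq_smul_inv_mul_of_gram_mul_eq hB hA]
  exact sum_alt_mul_row_eq_zero hω hsymm B

end LinearAlgebra

section TripleCrossProduct

theorem dot8_eq_dotProduct (a b : V8) : dot8 a b = a ⬝ᵥ b := rfl

/-- `form4 p q r s` bundled as an alternating map. -/
def form4Alternating (p q r s : Fin 8) : V8 [⋀^Fin 4]→ₗ[ℝ] ℝ :=
  Matrix.detRowAlternating.compLinearMap (LinearMap.funLeft ℝ ℝ ![p, q, r, s])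

theorem form4Alternating_apply (p q r s : Fin 8) (x : Fin 4 → V8) :
    form4Alternating p q r s x = form4 p q r s (x 0) (x 1) (x 2) (x 3) := by
  refine congrArg (det : Matrix (Fin 4) (Fin 4) ℝ → ℝ) ?_
  ext i j
  fin_cases i <;> fin_cases j <;> rfl

/-- The 4-form `Phi8` bundled as an alternating map. -/
def Phi8Alternating : V8 [⋀^Fin 4]→ₗ[ℝ] ℝ :=
  form4Alternating 0 1 2 3
    + (form4Alternating 0 1 4 5 - form4Alternating 0 1 6 7
        - form4Alternating 2 3 4 5 + form4Alternating 2 3 6 7)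
    + (form4Alternating 0 2 4 6 - form4Alternating 0 2 7 5
        - form4Alternating 3 1 4 6 + form4Alternating 3 1 7 5)
    + (form4Alternating 0 3 4 7 - form4Alternating 0 3 5 6
        - form4Alternating 1 2 4 7 + form4Alternating 1 2 5 6)
    + form4Alternating 4 5 6 7

theorem Phi8Alternating_apply (x : Fin 4 → V8) :
    Phi8Alternating x = Phi8 (x 0) (x 1) (x 2) (x 3) := by
  simp only [Phi8Alternating, Phi8, AlternatingMap.add_apply, AlternatingMap.sub_apply,
    form4Alternating_apply]

theorem Phi8_rotate (a b c d : V8) : Phi8 b c d a = -Phi8 a b c d := by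
  have h := Phi8Alternating.map_perm ![a, b, c, d] (finRotate 4)
  rw [sign_finRotate] at h
  simpa [Phi8Alternating_apply, Units.smul_def] using h

theorem Phi8_swap_left (a b c d : V8) : Phi8 b a c d = -Phi8 a b c d := by
  have h := Phi8Alternating.map_swap ![a, b, c, d] (i := 0) (j := 1) (by decide)
  rwa [Phi8Alternating_apply, Phi8Alternating_apply] at h

theorem Phi8_add_left (a a' b c d : V8) :
    Phi8 (a + a') b c d = Phi8 a b c d + Phi8 a' b c d := by
  have h := Phi8Alternating.map_vecCons_add ![b, c, d] a a'
  rwa [Phi8Alternating_apply, Phi8Alternating_apply, Phi8Alternating_apply] at h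

theorem Phi8_smul_left (r : ℝ) (a b c d : V8) : Phi8 (r • a) b c d = r * Phi8 a b c d := by
  have h := Phi8Alternating.map_vecCons_smul ![b, c, d] r a
  rwa [Phi8Alternating_apply, Phi8Alternating_apply] at h

/-- The triple cross product `X8` bundled as an alternating map. The sign comes from moving `e8 k`
from the last argument of `Phi8` to the first, where `AlternatingMap.curryLeft` takes it. -/
def X8Alternating : V8 [⋀^Fin 3]→ₗ[ℝ] V8 :=
  -AlternatingMap.pi fun k => Phi8Alternating.curryLeft (e8 k)

theorem X8Alternating_apply (x : Fin 3 → V8) : X8Alternating x = X8 (x 0) (x 1) (x 2) := by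
  ext k
  simp [X8Alternating, X8, Phi8Alternating_apply, Phi8_rotate (e8 k)]

theorem X8_rotate (a b c : V8) : X8 b c a = X8 a b c := by
  have h := X8Alternating.map_perm ![a, b, c] (finRotate 3)
  rw [sign_finRotate] at h
  simpa [X8Alternating_apply] using h

theorem X8_swap_right (a b c : V8) : X8 a c b = -X8 a b c := by
  have h := X8Alternating.map_swap ![a, b, c] (i := 1) (j := 2) (by decide)
  rwa [X8Alternating_apply, X8Alternating_apply] at h

theorem X8_dotProduct (a b c d : V8) : X8 a b c ⬝ᵥ d = Phi8 a b c d := by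
  let φ : V8 →ₗ[ℝ] ℝ :=
    { toFun := fun x => Phi8 x a b c
      map_add' := fun x x' => Phi8_add_left x x' a b c
      map_smul' := fun r x => Phi8_smul_left r x a b c }
  have hd : d = ∑ k, d k • e8 k := by
    ext j
    simp [e8]
  calc X8 a b c ⬝ᵥ d = -∑ k, d k • φ (e8 k) := by
        simp [φ, dotProduct, X8, Phi8_rotate (e8 _), mul_comm]
    _ = -φ d := by
        conv_rhs => rw [hd]
        simp only [map_sum, map_smul]
    _ = Phi8 a b c d := (Phi8_rotate d a b c).symm

theorem dotProduct_X8_self (a b c : V8) : a ⬝ᵥ X8 a b c = 0 := by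
  have h := Phi8Alternating.map_eq_zero_of_eq ![a, b, c, a] (i := 0) (j := 3) rfl (by decide)
  rwa [Phi8Alternating_apply, ← X8_dotProduct, dotProduct_comm] at h

/-- The minor of the `3 × 8` matrix with rows `a, b, c` on the columns `p, q, r`, that is
`(e^p ∧ e^q ∧ e^r)(a, b, c)`; the coordinates of `X8 a b c` are sums of such minors. -/
def minor3 (a b c : V8) (p q r : Fin 8) : ℝ :=
  Matrix.det !![a p, a q, a r; b p, b q, b r; c p, c q, c r]

theorem minor3_eq (a b c : V8) (p q r : Fin 8) :
    minor3 a b c p q r = a p * (b q * c r - b r * c q) - a q * (b p * c r - b r * c p)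
      + a r * (b p * c q - b q * c p) := by
  simp only [minor3, Matrix.det_fin_three, of_apply, cons_val]
  ring

theorem form4_eq_minor3 (p q r s : Fin 8) (a b c d : V8) :
    form4 p q r s a b c d = minor3 a b c p q r * d s - minor3 a b c p q s * d r
      + minor3 a b c p r s * d q - minor3 a b c q r s * d p := by
  have det_submatrix (j : Fin 4) :
      (!![a p, a q, a r, a s; b p, b q, b r, b s; c p, c q, c r, c s;
        d p, d q, d r, d s].submatrix (Fin.succAbove 3) j.succAbove).det =
        minor3 a b c (![p, q, r, s] (j.succAbove 0)) (![p, q, r, s] (j.succAbove 1))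
          (![p, q, r, s] (j.succAbove 2)) := by
    refine congrArg det ?_
    ext i k
    fin_cases i <;> fin_cases k <;> fin_cases j <;> rfl
  rw [form4, Matrix.det_succ_row _ 3, Fin.sum_univ_four]
  simp only [det_submatrix]
  change (-1) ^ 3 * d p * minor3 a b c q r s + (-1) ^ 4 * d q * minor3 a b c p r s
    + (-1) ^ 5 * d r * minor3 a b c p q s + (-1) ^ 6 * d s * minor3 a b c p q r = _
  ring

set_option maxRecDepth 10000 in
theorem X8_eq_minor3 (a b c : V8) :
    X8 a b c =
      let m := minor3 a b c
      ![-m 1 2 3 - m 1 4 5 + m 1 6 7 - m 2 4 6 - m 2 5 7 - m 3 4 7 + m 3 5 6,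
        m 0 2 3 + m 0 4 5 - m 0 6 7 + m 2 4 7 - m 2 5 6 - m 3 4 6 - m 3 5 7,
        -m 0 1 3 + m 0 4 6 + m 0 5 7 - m 1 4 7 + m 1 5 6 + m 3 4 5 - m 3 6 7,
        m 0 1 2 + m 0 4 7 - m 0 5 6 + m 1 4 6 + m 1 5 7 - m 2 4 5 + m 2 6 7,
        -m 0 1 5 - m 0 2 6 - m 0 3 7 + m 1 2 7 - m 1 3 6 + m 2 3 5 - m 5 6 7,
        m 0 1 4 - m 0 2 7 + m 0 3 6 - m 1 2 6 - m 1 3 7 - m 2 3 4 + m 4 6 7,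
        m 0 1 7 + m 0 2 4 - m 0 3 5 + m 1 2 5 + m 1 3 4 - m 2 3 7 - m 4 5 7,
        -m 0 1 6 + m 0 2 5 + m 0 3 4 - m 1 2 4 + m 1 3 5 + m 2 3 6 + m 4 5 6] := by
  ext k
  simp only [X8, Phi8, form4_eq_minor3, minor3_eq]
  fin_cases k <;>
    simp only [e8, Fin.zero_eta, Fin.mk_one, Fin.reduceFinMk, Fin.reduceEq, zero_ne_one,
      one_ne_zero, ↓reduceIte, Matrix.cons_val, Matrix.cons_val_zero, Matrix.cons_val_one] <;>
    ring

variable (u v w y : V8)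

theorem Phi8_rotate_fixing_last : Phi8 v w u y = Phi8 u v w y := by
  rw [← X8_dotProduct, X8_rotate, X8_dotProduct]

theorem Phi8_rotate_fixing_second : Phi8 y v u w = Phi8 u v w y := by
  rw [← neg_inj, ← Phi8_rotate, Phi8_swap_left]

set_option maxRecDepth 100000 in
set_option maxHeartbeats 4000000 in
-- Each coordinate is a quintic polynomial identity with thousands of monomials.
theorem X8_X8 : X8 u v (X8 u w y) =
    (u ⬝ᵥ u) • X8 v w y - (u ⬝ᵥ v) • X8 u w y - (u ⬝ᵥ w) • X8 u y v - (u ⬝ᵥ y) • X8 u v w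
      - Phi8 v w y u • u
      + ((u ⬝ᵥ u) * (v ⬝ᵥ y) - (u ⬝ᵥ v) * (u ⬝ᵥ y)) • w
      - ((u ⬝ᵥ u) * (v ⬝ᵥ w) - (u ⬝ᵥ v) * (u ⬝ᵥ w)) • y
      + ((u ⬝ᵥ y) * (v ⬝ᵥ w) - (u ⬝ᵥ w) * (v ⬝ᵥ y)) • u := by
  rw [← X8_dotProduct v w y u]
  ext k
  simp only [dotProduct, Fin.sum_univ_eight, Pi.add_apply, Pi.sub_apply, Pi.smul_apply,
    smul_eq_mul]
  rw [X8_eq_minor3 u v]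
  simp only [X8_eq_minor3]
  fin_cases k <;>
    simp only [Fin.zero_eta, Fin.mk_one, Fin.reduceFinMk, Matrix.cons_val, Matrix.cons_val_zero,
      Matrix.cons_val_one, minor3_eq] <;>
    ring

theorem X8_jacobiator :
    X8 u v (X8 u w y) + X8 u w (X8 u y v) + X8 u y (X8 u v w) =
      (3 : ℝ) • ((u ⬝ᵥ u) • X8 v w y - (u ⬝ᵥ v) • X8 u w y - (u ⬝ᵥ w) • X8 u y v
        - (u ⬝ᵥ y) • X8 u v w - Phi8 v w y u • u) := by
  simp only [X8_X8, ← X8_dotProduct, X8_rotate v w y, X8_rotate y v w, dotProduct_comm w v,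
    dotProduct_comm y v, dotProduct_comm y w]
  module

end TripleCrossProduct

section TwoForm

/-- The 2-form `a♭ ∧ b♭ + Φ(a, b, ·, ·)` evaluated at `(x, z)`, as a bilinear form in `(a, b)`. -/
def wedgeAddPhi8 (x z : V8) : LinearMap.BilinForm ℝ V8 :=
  LinearMap.mk₂ ℝ (fun a b => wedgeFlat a b x z + Phi8 a b x z)
    (fun a a' b => by
      simp only [wedgeFlat, dot8_eq_dotProduct, add_dotProduct, Phi8_add_left]
      ring)
    (fun r a b => by
      simp only [wedgeFlat, dot8_eq_dotProduct, smul_dotProduct, smul_eq_mul, Phi8_smul_left]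
      ring)
    (fun a b b' => by
      simp only [wedgeFlat, dot8_eq_dotProduct, add_dotProduct, Phi8_swap_left _ a, Phi8_add_left]
      ring)
    (fun r a b => by
      simp only [wedgeFlat, dot8_eq_dotProduct, smul_dotProduct, smul_eq_mul, Phi8_swap_left _ a,
        Phi8_smul_left]
      ring)

theorem isAlt_wedgeAddPhi8 (x z : V8) : (wedgeAddPhi8 x z).IsAlt := by
  intro a
  have h := Phi8_swap_left a a x z
  simp only [wedgeAddPhi8, LinearMap.mk₂_apply, wedgeFlat]
  linarith

variable (u v w y : V8)

theorem eta8_apply_first (z : V8) :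
    eta8 u v w y u z =
      -2 * (((u ⬝ᵥ u) • X8 v w y + (u ⬝ᵥ v) • X8 w u y + (u ⬝ᵥ w) • X8 u v y
        + (u ⬝ᵥ y) • X8 v u w + Phi8 u v w y • u) ⬝ᵥ z) := by
  have contract (a b : V8) : Phi8 a b u z = X8 u a b ⬝ᵥ z := by
    rw [← X8_dotProduct, X8_rotate]
  have contract_self (b : V8) : Phi8 u b u z = 0 := by
    have h := Phi8Alternating.map_eq_zero_of_eq ![u, b, u, z] (i := 0) (j := 2) rfl (by decide)
    rwa [Phi8Alternating_apply] at h
  have jacobiator := congrArg (· ⬝ᵥ z) (X8_jacobiator u v y w)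
  simp only [add_dotProduct, sub_dotProduct, smul_dotProduct, smul_eq_mul, X8_swap_right v w y,
    neg_dotProduct, ← X8_dotProduct v y w, X8_dotProduct v w y u, Phi8_rotate u v w y] at jacobiator
  simp only [eta8, wedgeFlat, dot8_eq_dotProduct, contract_self, contract,
    ← X8_rotate w u y, X8_rotate w v u, X8_rotate u w v, add_dotProduct, smul_dotProduct,
    smul_eq_mul, dotProduct_X8_self, Phi8_rotate u v w y, X8_dotProduct v w y u,
    dotProduct_comm _ u]
  linarith

theorem eta8_rotate_fixing_last (x z : V8) : eta8 v w u y x z = eta8 u v w y x z := by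
  simp only [eta8, X8_rotate w v u]
  ring

theorem eta8_rotate_fixing_second (x z : V8) : eta8 y v u w x z = eta8 u v w y x z := by
  simp only [eta8, X8_rotate w u y, X8_rotate y v w, X8_rotate u v y]
  ring

end TwoForm

section Cofactors

variable (u v w y : V8)

/-- The matrix whose rows are the vectors paired with `u, v, w, y` in `eta8 u v w y`: the triple
cross products of the complementary triples, ordered so that, up to a common factor, their signs
are those of cofactors. -/
def crossCofactors : Matrix (Fin 4) (Fin 8) ℝ :=
  of ![X8 v w y, X8 w u y, X8 u v y, X8 v u w]

/-- The positions in `![u, v, w, y]` of the three factors in each row of `crossCofactors`. -/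
def cofactorIndex : Fin 4 → Fin 3 → Fin 4 := ![![1, 2, 3], ![2, 0, 3], ![0, 1, 3], ![1, 0, 2]]

theorem crossCofactors_row (i : Fin 4) :
    (crossCofactors u v w y).row i = X8Alternating (![u, v, w, y] ∘ cofactorIndex i) := by
  rw [X8Alternating_apply]
  fin_cases i <;> rfl

theorem exists_eq_cofactorIndex_comp_perm {σ : Fin 3 → Fin 4} (hσ : σ.Injective) :
    ∃ i, ∃ τ : Equiv.Perm (Fin 3), σ = cofactorIndex i ∘ τ := by
  revert σ
  decide

theorem exists_odd_perm_eq_snoc_cofactorIndex (i : Fin 4) :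
    ∃ τ : Equiv.Perm (Fin 4),
      τ.sign = -1 ∧ (Fin.snoc (cofactorIndex i) i : Fin 4 → Fin 4) = τ := by
  revert i
  decide

theorem not_injective_snoc_cofactorIndex {i j : Fin 4} (hij : i ≠ j) :
    ¬ (Fin.snoc (cofactorIndex i) j : Fin 4 → Fin 4).Injective := by
  revert i j
  decide

theorem crossCofactors_row_dotProduct (i j : Fin 4) :
    (crossCofactors u v w y).row i ⬝ᵥ ![u, v, w, y] j =
      Phi8Alternating (![u, v, w, y] ∘ (Fin.snoc (cofactorIndex i) j : Fin 4 → Fin 4)) := by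
  rw [crossCofactors_row, X8Alternating_apply, X8_dotProduct, Phi8Alternating_apply]
  rfl

theorem crossCofactors_mul_transpose :
    crossCofactors u v w y * (of ![u, v, w, y])ᵀ =
      (-Phi8 u v w y) • (1 : Matrix (Fin 4) (Fin 4) ℝ) := by
  ext i j
  refine (crossCofactors_row_dotProduct u v w y i j).trans ?_
  obtain rfl | hij := eq_or_ne i j
  · obtain ⟨τ, hτ, hi⟩ := exists_odd_perm_eq_snoc_cofactorIndex i
    rw [hi, AlternatingMap.map_perm, hτ, Phi8Alternating_apply]
    simp
  · rw [AlternatingMap.map_eq_zero_of_not_injective _ _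
      fun h => not_injective_snoc_cofactorIndex hij h.of_comp]
    simp [hij]

theorem forall_X8_mem_iff_crossCofactors_mem (S : Submodule ℝ V8) :
    (∀ a ∈ Submodule.span ℝ (Set.range ![u, v, w, y]),
      ∀ b ∈ Submodule.span ℝ (Set.range ![u, v, w, y]),
        ∀ c ∈ Submodule.span ℝ (Set.range ![u, v, w, y]), X8 a b c ∈ S) ↔
      ∀ i, (crossCofactors u v w y).row i ∈ S := by
  constructor
  · intro h i
    have hb (j) : ![u, v, w, y] j ∈ Submodule.span ℝ (Set.range ![u, v, w, y]) :=
      Submodule.subset_span (Set.mem_range_self j)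
    rw [crossCofactors_row, X8Alternating_apply]
    exact h _ (hb _) _ (hb _) _ (hb _)
  · intro h a ha b hb c hc
    have habc := alternatingMap_mem_of_forall_injective X8Alternating ![u, v, w, y] S
      (fun σ hσ => ?_) ![a, b, c] (fun i => by fin_cases i; exacts [ha, hb, hc])
    · rwa [X8Alternating_apply] at habc
    · obtain ⟨i, τ, rfl⟩ := exists_eq_cofactorIndex_comp_perm hσ
      rw [← Function.comp_assoc, AlternatingMap.map_perm, ← crossCofactors_row]
      exact S.smul_of_tower_mem _ (h i)

theorem eta8_eq_sum_wedgeAddPhi8 (x z : V8) :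
    eta8 u v w y x z =
      ∑ i, wedgeAddPhi8 x z ((of ![u, v, w, y]).row i) ((crossCofactors u v w y).row i) := by
  rw [Fin.sum_univ_four]
  change _ = (wedgeFlat u (X8 v w y) x z + Phi8 u (X8 v w y) x z)
    + (wedgeFlat v (X8 w u y) x z + Phi8 v (X8 w u y) x z)
    + (wedgeFlat w (X8 u v y) x z + Phi8 w (X8 u v y) x z)
    + (wedgeFlat y (X8 v u w) x z + Phi8 y (X8 v u w) x z)
  rw [eta8]
  ring

theorem eta8_apply_row (i : Fin 4) (z : V8) :
    eta8 u v w y (![u, v, w, y] i) z =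
      -2 * ((of ![u, v, w, y] * (of ![u, v, w, y])ᵀ * crossCofactors u v w y
        + Phi8 u v w y • of ![u, v, w, y]).row i ⬝ᵥ z) := by
  have row_eq : (of ![u, v, w, y] * (of ![u, v, w, y])ᵀ * crossCofactors u v w y
      + Phi8 u v w y • of ![u, v, w, y]).row i =
      (![u, v, w, y] i ⬝ᵥ u) • X8 v w y + (![u, v, w, y] i ⬝ᵥ v) • X8 w u y
        + (![u, v, w, y] i ⬝ᵥ w) • X8 u v y + (![u, v, w, y] i ⬝ᵥ y) • X8 v u w
        + Phi8 u v w y • ![u, v, w, y] i := by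
    ext k
    simp only [Matrix.row, Matrix.add_apply, Matrix.mul_apply (M := _ * _), Fin.sum_univ_four]
    rfl
  rw [row_eq]
  fin_cases i
  · exact eta8_apply_first u v w y z
  · change eta8 u v w y v z = -2 * (((v ⬝ᵥ u) • X8 v w y + (v ⬝ᵥ v) • X8 w u y
      + (v ⬝ᵥ w) • X8 u v y + (v ⬝ᵥ y) • X8 v u w + Phi8 u v w y • v) ⬝ᵥ z)
    rw [← eta8_rotate_fixing_last, eta8_apply_first, Phi8_rotate_fixing_last, X8_rotate w v u]
    congr 2
    module
  · change eta8 u v w y w z = -2 * (((w ⬝ᵥ u) • X8 v w y + (w ⬝ᵥ v) • X8 w u y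
      + (w ⬝ᵥ w) • X8 u v y + (w ⬝ᵥ y) • X8 v u w + Phi8 u v w y • w) ⬝ᵥ z)
    rw [← eta8_rotate_fixing_last, ← eta8_rotate_fixing_last, eta8_apply_first,
      Phi8_rotate_fixing_last, Phi8_rotate_fixing_last, ← X8_rotate v u w]
    congr 2
    module
  · change eta8 u v w y y z = -2 * (((y ⬝ᵥ u) • X8 v w y + (y ⬝ᵥ v) • X8 w u y
      + (y ⬝ᵥ w) • X8 u v y + (y ⬝ᵥ y) • X8 v u w + Phi8 u v w y • y) ⬝ᵥ z)
    rw [← eta8_rotate_fixing_second, eta8_apply_first, Phi8_rotate_fixing_second,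
      X8_rotate w u y, X8_rotate y v w, X8_rotate u v y]
    congr 2
    module

theorem gram_mul_crossCofactors_eq_iff_eta8_eq_zero (h : LinearIndependent ℝ ![u, v, w, y]) :
    of ![u, v, w, y] * (of ![u, v, w, y])ᵀ * crossCofactors u v w y =
      (-Phi8 u v w y) • of ![u, v, w, y] ↔ ∀ x z, eta8 u v w y x z = 0 := by
  constructor
  · intro hgram x z
    rw [eta8_eq_sum_wedgeAddPhi8]
    exact sum_alt_row_eq_zero_of_gram_mul_eq h hgram (isAlt_wedgeAddPhi8 x z)
  · intro heta
    rw [neg_smul, ← add_eq_zero_iff_eq_neg]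
    refine funext fun i => dotProduct_eq_zero _ fun z => ?_
    have hrow := eta8_apply_row u v w y i z
    rw [heta, zero_eq_mul] at hrow
    exact hrow.resolve_left (by norm_num)

end Cofactors

/-- for linearly independent u,v,w,y ∈ ℝ⁸, the subspace
V = span{u,v,w,y} is closed under the triple cross product iff the 2-form η
vanishes identically. -/
theorem stmt3 (u v w y : V8) (h : LinearIndependent ℝ ![u, v, w, y]) :
    (∀ a ∈ Submodule.span ℝ ({u, v, w, y} : Set V8),
      ∀ b ∈ Submodule.span ℝ ({u, v, w, y} : Set V8),
        ∀ c ∈ Submodule.span ℝ ({u, v, w, y} : Set V8),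
          X8 a b c ∈ Submodule.span ℝ ({u, v, w, y} : Set V8))
      ↔ (∀ x1 x2 : V8, eta8 u v w y x1 x2 = 0) := by
  have hrange : ({u, v, w, y} : Set V8) = Set.range ![u, v, w, y] := by
    simp only [Matrix.range_cons, Matrix.range_empty, Set.union_empty, Set.singleton_union]
  rw [hrange, forall_X8_mem_iff_crossCofactors_mem,
    ← gram_mul_crossCofactors_eq_iff_eta8_eq_zero u v w y h]
  exact forall_row_mem_span_iff_gram_mul_eq h (crossCofactors_mul_transpose u v w y)
end
end

section
/- For all u, v, w ∈ ℝ⁸ one has ‖X(u,v,w)‖² = det G, where G is the 3×3 Gram matrix with entries G₁₁=⟨u,u⟩, G₁₂=⟨u,v⟩, G₁₃=⟨u,w⟩, G₂₂=⟨v,v⟩, G₂₃=⟨v,w⟩, G₃₃=⟨w,w⟩ (and symmetric); i.e. the norm of the triple cross product equals the norm of u ∧ v ∧ w. -/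
noncomputable section

/-!
Identify `ℝ⁸` with the octonions `𝕆 = ℍ ⊕ ℍ`. The product `(x, y) ↦ x̄ y` multiplies norms and
satisfies `x̄ x = ‖x‖²`, and in terms of it
`X(u, v, w) = w (v̄ u) - ⟨v, w⟩ u - ⟨u, v⟩ w + ⟨u, w⟩ v`.
Polarizing `‖x̄ y‖ = ‖x‖ ‖y‖` evaluates the inner product of `w (v̄ u)` with each of `u`, `v`, `w`,
and expanding `‖X(u, v, w)‖²` then gives the Gram determinant.
-/

open scoped RealInnerProductSpace Quaternion

section NormMultiplicative

variable {E F G : Type*} [NormedAddCommGroup E] [InnerProductSpace ℝ E]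
  [NormedAddCommGroup F] [InnerProductSpace ℝ F] [NormedAddCommGroup G] [InnerProductSpace ℝ G]
  {B : E →ₗ[ℝ] F →ₗ[ℝ] G}

/-- Bilinear maps that multiply norms, such as the products of the real composition algebras. -/
structure IsNormMultiplicative (B : E →ₗ[ℝ] F →ₗ[ℝ] G) : Prop where
  norm_apply : ∀ x y, ‖B x y‖ = ‖x‖ * ‖y‖

namespace IsNormMultiplicative

theorem inner_same_left (hB : IsNormMultiplicative B) (x : E) (y y' : F) :
    ⟪B x y, B x y'⟫ = ‖x‖ ^ 2 * ⟪y, y'⟫ := by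
  have norm_sq_sum : ‖B x y + B x y'‖ ^ 2 = ‖x‖ ^ 2 * ‖y + y'‖ ^ 2 := by
    rw [← map_add, hB.norm_apply, mul_pow]
  rw [norm_add_sq_real, norm_add_sq_real, hB.norm_apply, hB.norm_apply] at norm_sq_sum
  linear_combination norm_sq_sum / 2

theorem inner_add_inner_swap (hB : IsNormMultiplicative B) (x x' : E) (y y' : F) :
    ⟪B x y, B x' y'⟫ + ⟪B x y', B x' y⟫ = 2 * ⟪x, x'⟫ * ⟪y, y'⟫ := by
  have inner_sum := hB.inner_same_left (x + x') y y'
  rw [norm_add_sq_real, map_add, LinearMap.add_apply, LinearMap.add_apply, inner_add_left,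
    inner_add_right, inner_add_right, hB.inner_same_left, hB.inner_same_left,
    real_inner_comm (B x y') (B x' y)] at inner_sum
  linear_combination inner_sum

theorem inner_same_right (hB : IsNormMultiplicative B) (x x' : E) (y : F) :
    ⟪B x y, B x' y⟫ = ⟪x, x'⟫ * ‖y‖ ^ 2 := by
  have swap := hB.inner_add_inner_swap x x' y y
  rw [real_inner_self_eq_norm_sq] at swap
  linear_combination swap / 2

variable [FiniteDimensional ℝ F] [FiniteDimensional ℝ G]

theorem adjoint_apply_apply (hB : IsNormMultiplicative B) (x : E) (y : F) :
    (B x).adjoint (B x y) = ‖x‖ ^ 2 • y := by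
  refine ext_inner_right ℝ fun z => ?_
  rw [LinearMap.adjoint_inner_left, hB.inner_same_left, real_inner_smul_left]

theorem norm_adjoint_apply (hB : IsNormMultiplicative B)
    (hFG : Module.finrank ℝ F = Module.finrank ℝ G) (x : E) (z : G) :
    ‖(B x).adjoint z‖ = ‖x‖ * ‖z‖ := by
  obtain rfl | hx := eq_or_ne x 0
  · simp
  have injective : Function.Injective (B x) := by
    refine (injective_iff_map_eq_zero (B x)).2 fun y hy => ?_
    simpa [hy, hx] using hB.norm_apply x y
  obtain ⟨y, rfl⟩ := (LinearMap.injective_iff_surjective_of_finrank_eq_finrank hFG).1 injective z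
  rw [hB.adjoint_apply_apply, norm_smul, hB.norm_apply, norm_pow, norm_norm]
  ring

end IsNormMultiplicative

end NormMultiplicative

section TripleCross

variable {E F : Type*} [NormedAddCommGroup E] [InnerProductSpace ℝ E]
  [NormedAddCommGroup F] [InnerProductSpace ℝ F] {B : E →ₗ[ℝ] E →ₗ[ℝ] F} {e : F}

namespace IsNormMultiplicative

theorem inner_apply_unit (hB : IsNormMultiplicative B) (he : ∀ x, B x x = ‖x‖ ^ 2 • e)
    (x y : E) : ⟪B x y, e⟫ = ⟪x, y⟫ := by
  obtain rfl | hx := eq_or_ne x 0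
  · simp
  have norm_sq_ne_zero : ‖x‖ ^ 2 ≠ 0 := pow_ne_zero 2 (norm_ne_zero_iff.2 hx)
  refine mul_left_cancel₀ norm_sq_ne_zero ?_
  rw [← real_inner_smul_right, ← he, hB.inner_same_left, real_inner_comm]

theorem inner_apply_diag (hB : IsNormMultiplicative B) (he : ∀ x, B x x = ‖x‖ ^ 2 • e)
    (x y z : E) : ⟪B x y, B z z⟫ = ⟪x, y⟫ * ‖z‖ ^ 2 := by
  rw [he, real_inner_smul_right, hB.inner_apply_unit he, mul_comm]

theorem inner_apply_crossed (hB : IsNormMultiplicative B) (he : ∀ x, B x x = ‖x‖ ^ 2 • e)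
    (x y z : E) : ⟪B y x, B z y⟫ = 2 * ⟪x, y⟫ * ⟪y, z⟫ - ‖y‖ ^ 2 * ⟪x, z⟫ := by
  have swap := hB.inner_add_inner_swap y z x y
  rw [real_inner_comm (B z x), hB.inner_apply_diag he, real_inner_comm x z] at swap
  linear_combination swap

end IsNormMultiplicative

variable [FiniteDimensional ℝ E] [FiniteDimensional ℝ F]

variable (B) in
/-- The triple cross product attached to a bilinear map `B`. For the octonions and
`B x y = x̄ y`, the adjoint of `B w` is left multiplication by `w`, so the leading term is
`w (v̄ u)`, and the other terms make the product alternating. The order `w`, `v`, `u` rather than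
`u`, `v`, `w` (which differ by a sign of the product) matches the signs of `Phi8`. -/
def tripleCross (u v w : E) : E :=
  (B w).adjoint (B v u) - (⟪v, w⟫ • u + ⟪u, v⟫ • w - ⟪u, w⟫ • v)

theorem inner_tripleCross (u v w z : E) :
    ⟪tripleCross B u v w, z⟫ =
      ⟪B v u, B w z⟫ - (⟪v, w⟫ * ⟪u, z⟫ + ⟪u, v⟫ * ⟪w, z⟫ - ⟪u, w⟫ * ⟪v, z⟫) := by
  simp only [tripleCross, inner_sub_left, inner_add_left, real_inner_smul_left,
    LinearMap.adjoint_inner_left]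

theorem IsNormMultiplicative.norm_tripleCross_sq (hB : IsNormMultiplicative B)
    (he : ∀ x, B x x = ‖x‖ ^ 2 • e) (hEF : Module.finrank ℝ E = Module.finrank ℝ F)
    (u v w : E) :
    ‖tripleCross B u v w‖ ^ 2 = (Matrix.gram ℝ ![u, v, w]).det := by
  have norm_leading : ‖(B w).adjoint (B v u)‖ = ‖w‖ * (‖v‖ * ‖u‖) := by
    rw [hB.norm_adjoint_apply hEF, hB.norm_apply]
  have inner_leading_u : ⟪(B w).adjoint (B v u), u⟫ = ⟪v, w⟫ * ‖u‖ ^ 2 := by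
    rw [LinearMap.adjoint_inner_left, hB.inner_same_right]
  have inner_leading_v : ⟪(B w).adjoint (B v u), v⟫ =
      2 * ⟪u, v⟫ * ⟪v, w⟫ - ‖v‖ ^ 2 * ⟪u, w⟫ := by
    rw [LinearMap.adjoint_inner_left, hB.inner_apply_crossed he]
  have inner_leading_w : ⟪(B w).adjoint (B v u), w⟫ = ⟪u, v⟫ * ‖w‖ ^ 2 := by
    rw [LinearMap.adjoint_inner_left, hB.inner_apply_diag he, real_inner_comm]
  rw [tripleCross, norm_sub_sq_real, norm_leading]
  simp only [← real_inner_self_eq_norm_sq, inner_sub_left, inner_add_left, inner_sub_right,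
    inner_add_right, real_inner_smul_left, real_inner_smul_right, inner_leading_u, inner_leading_v,
    inner_leading_w, Matrix.det_fin_three, Matrix.gram_apply, Matrix.cons_val, real_inner_comm u v,
    real_inner_comm u w, real_inner_comm v w]
  simp only [real_inner_self_eq_norm_sq]
  ring

end TripleCross

open WithLp (toLp)

/-- The octonions, as the Cayley–Dickson double of the quaternions with its Euclidean norm. -/
abbrev Octonion := WithLp 2 (ℍ × ℍ)

theorem octonion_ext {x y : Octonion} (fst : x.fst = y.fst) (snd : x.snd = y.snd) : x = y :=
  WithLp.ofLp_injective 2 (Prod.ext fst snd)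

/-- The product `x̄ y` of octonions, where `(a, b) (c, d) = (a c - d̄ b, d a + b c̄)` and the
conjugate of `(a, b)` is `(ā, -b)`. -/
def octonionConjMul : Octonion →ₗ[ℝ] Octonion →ₗ[ℝ] Octonion :=
  LinearMap.mk₂ ℝ
    (fun x y => toLp 2
      (star x.fst * y.fst + star y.snd * x.snd, y.snd * star x.fst - x.snd * star y.fst))
    (fun _ _ _ => by
      apply octonion_ext <;>
        simp only [WithLp.add_fst, WithLp.add_snd, WithLp.toLp_fst, WithLp.toLp_snd, star_add] <;>
        noncomm_ring)
    (fun _ _ _ => by apply octonion_ext <;> simp [smul_sub])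
    (fun _ _ _ => by
      apply octonion_ext <;>
        simp only [WithLp.add_fst, WithLp.add_snd, WithLp.toLp_fst, WithLp.toLp_snd, star_add] <;>
        noncomm_ring)
    (fun _ _ _ => by apply octonion_ext <;> simp [smul_sub])

theorem octonionConjMul_fst (x y : Octonion) :
    (octonionConjMul x y).fst = star x.fst * y.fst + star y.snd * x.snd := rfl

theorem octonionConjMul_snd (x y : Octonion) :
    (octonionConjMul x y).snd = y.snd * star x.fst - x.snd * star y.fst := rfl

theorem quaternion_re_mul_comm {R : Type*} [CommRing R] (a b : ℍ[R]) :
    (a * b).re = (b * a).re := by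
  simp only [Quaternion.re_mul]
  ring

theorem isNormMultiplicative_octonionConjMul : IsNormMultiplicative octonionConjMul := by
  refine ⟨fun x y => ?_⟩
  have cross_terms_cancel : ⟪star x.fst * y.fst, star y.snd * x.snd⟫ =
      ⟪y.snd * star x.fst, x.snd * star y.fst⟫ := by
    simp only [Quaternion.inner_def, star_mul, star_star]
    rw [← mul_assoc, quaternion_re_mul_comm]
    simp only [mul_assoc]
  refine (sq_eq_sq₀ (norm_nonneg _) (by positivity)).1 ?_
  simp only [mul_pow, WithLp.prod_norm_sq_eq_of_L2, octonionConjMul_fst, octonionConjMul_snd,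
    norm_add_sq_real, norm_sub_sq_real, cross_terms_cancel, norm_mul, norm_star]
  ring

theorem octonionConjMul_self (x : Octonion) :
    octonionConjMul x x = ‖x‖ ^ 2 • toLp 2 (1, 0) := by
  apply octonion_ext
  · rw [octonionConjMul_fst, WithLp.prod_norm_sq_eq_of_L2, Quaternion.star_mul_self,
      Quaternion.star_mul_self, Quaternion.normSq_eq_norm_mul_self,
      Quaternion.normSq_eq_norm_mul_self, ← sq, ← sq, ← Quaternion.coe_add]
    simp [← Quaternion.coe_mul_eq_smul]
  · simp [octonionConjMul_snd]

theorem octonion_inner_eq_sum_coords (x y : Octonion) :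
    ⟪x, y⟫ =
      x.fst.re * y.fst.re + x.fst.imI * y.fst.imI + x.fst.imJ * y.fst.imJ + x.fst.imK * y.fst.imK +
        x.snd.re * y.snd.re + x.snd.imI * y.snd.imI + x.snd.imJ * y.snd.imJ +
        x.snd.imK * y.snd.imK := by
  simp only [WithLp.prod_inner_apply, WithLp.ofLp_fst, WithLp.ofLp_snd, Quaternion.inner_def,
    Quaternion.re_mul, Quaternion.re_star, Quaternion.imI_star, Quaternion.imJ_star,
    Quaternion.imK_star]
  ring

/-- The octonion `(x₁ + x₂ i + x₃ j + x₄ k, y₁ + y₂ i + y₃ j + y₄ k)` with the coordinates of a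
vector of `ℝ⁸`. -/
def toOctonion (u : V8) : Octonion :=
  toLp 2 (⟨u 0, u 1, u 2, u 3⟩, ⟨u 4, u 5, u 6, u 7⟩)

theorem toOctonion_fst (u : V8) : (toOctonion u).fst = ⟨u 0, u 1, u 2, u 3⟩ := rfl

theorem toOctonion_snd (u : V8) : (toOctonion u).snd = ⟨u 4, u 5, u 6, u 7⟩ := rfl

theorem toOctonion_surjective : Function.Surjective toOctonion := fun x =>
  ⟨![x.fst.re, x.fst.imI, x.fst.imJ, x.fst.imK, x.snd.re, x.snd.imI, x.snd.imJ, x.snd.imK], rfl⟩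

theorem inner_toOctonion (u v : V8) : ⟪toOctonion u, toOctonion v⟫ = dot8 u v := by
  rw [octonion_inner_eq_sum_coords, dot8, Fin.sum_univ_eight]
  rfl

theorem dot8_e8 (u : V8) (k : Fin 8) : dot8 u (e8 k) = u k := by
  simp [dot8, e8]

theorem form4_eq_laplace_last (p q r s : Fin 8) (a b c d : V8) :
    form4 p q r s a b c d =
      d s * !![a p, a q, a r; b p, b q, b r; c p, c q, c r].det
        - d r * !![a p, a q, a s; b p, b q, b s; c p, c q, c s].det
        + d q * !![a p, a r, a s; b p, b r, b s; c p, c r, c s].det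
        - d p * !![a q, a r, a s; b q, b r, b s; c q, c r, c s].det := by
  rw [form4, Matrix.det_succ_row _ 3, Fin.sum_univ_four]
  simp only [Matrix.det_fin_three, Matrix.submatrix_apply, Matrix.of_apply, Matrix.cons_val',
    Matrix.cons_val, Fin.succAbove, Fin.reduceLT, Fin.reduceCastSucc,
    Fin.reduceSucc, if_true, if_false, Fin.coe_ofNat_eq_mod]
  ring

theorem Phi8_eq_inner_tripleCross (u v w z : V8) :
    Phi8 u v w z =
      ⟪tripleCross octonionConjMul (toOctonion u) (toOctonion v) (toOctonion w),
        toOctonion z⟫ := by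
  simp only [inner_tripleCross, octonion_inner_eq_sum_coords, octonionConjMul_fst,
    octonionConjMul_snd,
    Quaternion.re_add, Quaternion.imI_add, Quaternion.imJ_add, Quaternion.imK_add,
    Quaternion.re_sub, Quaternion.imI_sub, Quaternion.imJ_sub, Quaternion.imK_sub,
    Quaternion.re_mul, Quaternion.imI_mul, Quaternion.imJ_mul, Quaternion.imK_mul,
    Quaternion.re_star, Quaternion.imI_star, Quaternion.imJ_star, Quaternion.imK_star]
  simp only [toOctonion_fst, toOctonion_snd, Phi8, form4_eq_laplace_last, Matrix.det_fin_three,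
    Matrix.of_apply, Matrix.cons_val', Matrix.cons_val]
  ring

theorem toOctonion_X8 (u v w : V8) :
    toOctonion (X8 u v w) =
      tripleCross octonionConjMul (toOctonion u) (toOctonion v) (toOctonion w) := by
  obtain ⟨t, ht⟩ := toOctonion_surjective
    (tripleCross octonionConjMul (toOctonion u) (toOctonion v) (toOctonion w))
  have X8_eq : X8 u v w = t := by
    ext k
    rw [X8, Phi8_eq_inner_tripleCross, ← ht, inner_toOctonion, dot8_e8]
  rw [X8_eq, ht]

theorem dot8_comm (u v : V8) : dot8 u v = dot8 v u :=
  dotProduct_comm u v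

/-- ‖X(u,v,w)‖² equals the Gram determinant of u, v, w, i.e. the
    norm of the triple cross product equals the norm of u ∧ v ∧ w. -/
theorem stmt6 (u v w : V8) :
    dot8 (X8 u v w) (X8 u v w) =
      Matrix.det !![dot8 u u, dot8 u v, dot8 u w;
                    dot8 u v, dot8 v v, dot8 v w;
                    dot8 u w, dot8 v w, dot8 w w] := by
  rw [← inner_toOctonion, toOctonion_X8, real_inner_self_eq_norm_sq,
    isNormMultiplicative_octonionConjMul.norm_tripleCross_sq octonionConjMul_self rfl]
  simp only [Matrix.det_fin_three, Matrix.gram_apply, Matrix.of_apply, Matrix.cons_val',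
    Matrix.cons_val, inner_toOctonion, dot8_comm v u, dot8_comm w u, dot8_comm w v]
end
end

section
/- Fix u, v > 0 and real numbers A¹₁₁, A¹₁₂, A¹₂₂, A²₁₁, A²₁₂, A²₂₂. In ℝ⁸ with standard basis e₁, e₂, e₃, e₄, f₁, f₂, f₃, f₄, for (t₁,t₂) ∈ ℝ² define E₁ = e₁ + (t₁/2)[(−A¹₁₁ − A²₁₂) f₃ + (−A²₁₁ + A¹₁₂) f₄] + (t₂/2)[(A²₁₁ − A¹₁₂) f₃ + (−A¹₁₁ − A²₁₂) f₄], E₂ = e₂ + (t₁/2)[(−A¹₁₂ − A²₂₂) f₃ + (−A²₁₂ + A¹₂₂) f₄] + (t₂/2)[(A²₁₂ − A¹₂₂) f₃ + (−A¹₁₂ − A²₂₂) f₄], F₁ = f₁, F₂ = f₂. Then the 4-dimensional subspace span_ℝ{E₁, E₂, F₁, F₂} is closed under the triple cross product X_{u,v} for every (t₁,t₂) ∈ ℝ² if and only if A¹₁₁ + A¹₂₂ = 0 and A²₁₁ + A²₂₂ = 0. (This is the pointwise linear-algebra content of the theorem that the rank-2 subbundle 𝒮⁻⁺ over a surface Σ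 ⊂ S⁴ is Cayley in the negative spinor bundle 𝒮⁻(S⁴) with the Bryant–Salamon Spin(7) metric if and only if Σ is minimal.) -/
/-!
STATEMENT 15: the pointwise linear-algebra content of: the rank-2 subbundle
𝒮⁻⁺ over a surface Σ ⊂ S⁴ is Cayley in the negative spinor bundle 𝒮⁻(S⁴)
with the Bryant–Salamon Spin(7) metric iff Σ is minimal.
-/

noncomputable section

/-- The Bryant–Salamon Spin(7) 4-form
Φ_{u,v} = u⁴ e¹∧e²∧e³∧e⁴ + u²v² [(e¹∧e² − e³∧e⁴)∧(f¹∧f² − f³∧f⁴)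
  + (e¹∧e³ − e⁴∧e²)∧(f¹∧f³ − f⁴∧f²) + (e¹∧e⁴ − e²∧e³)∧(f¹∧f⁴ − f²∧f³)]
  + v⁴ f¹∧f²∧f³∧f⁴. -/
def PhiBS (u v : ℝ) (a b c d : V8) : ℝ :=
  u ^ 4 * form4 0 1 2 3 a b c d
    + u ^ 2 * v ^ 2 * (form4 0 1 4 5 a b c d - form4 0 1 6 7 a b c d
        - form4 2 3 4 5 a b c d + form4 2 3 6 7 a b c d
        + form4 0 2 4 6 a b c d - form4 0 2 7 5 a b c d
        - form4 3 1 4 6 a b c d + form4 3 1 7 5 a b c d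
        + form4 0 3 4 7 a b c d - form4 0 3 5 6 a b c d
        - form4 1 2 4 7 a b c d + form4 1 2 5 6 a b c d)
    + v ^ 4 * form4 4 5 6 7 a b c d

/-- The triple cross product X_{u,v} determined by
g_{u,v}(X_{u,v}(a,b,c), z) = Φ_{u,v}(a,b,c,z), where
g_{u,v} = u²(dx₁²+⋯+dx₄²) + v²(dy₁²+⋯+dy₄²). -/
def XBS (u v : ℝ) (a b c : V8) : V8 :=
  fun k => PhiBS u v a b c (e8 k) / (if (k : ℕ) < 4 then u ^ 2 else v ^ 2)

/-!
Write `E₁ = e₁ + z`, `E₂ = e₂ + w` with `z, w` in the plane of `f₃, f₄`, identified with `ℂ`. The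
cross product of `E₁, f₁, f₂` is `v² (e₂ + i z)`, whatever `w` is, so closure forces `w = i z`.
Conversely `w = i z` makes all four cross products of frame vectors multiples of frame vectors, and
this suffices because the cross product is alternating. For the frame of the theorem,
`w - i z = -(t₁ + i t₂) / 2 * ((A²₁₁ + A²₂₂) - i (A¹₁₁ + A¹₂₂))`, so a single nonzero `(t₁, t₂)`
already detects minimality.
-/

open Complex (I)

section AlternatingMap

theorem exists_succAbove_comp_perm_of_injective {n : ℕ} {σ : Fin n → Fin (n + 1)}
    (hσ : Function.Injective σ) :
    ∃ (i : Fin (n + 1)) (π : Equiv.Perm (Fin n)), σ = i.succAbove ∘ π := by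
  have not_surjective : ¬ Function.Surjective σ := fun hsurj =>
    absurd (Fintype.card_le_of_surjective σ hsurj) (by simp)
  obtain ⟨i, hi⟩ := not_forall.mp not_surjective
  choose π hπ using fun j => Fin.exists_succAbove_eq fun hj : σ j = i => hi ⟨j, hj⟩
  have π_injective : Function.Injective π := fun j k hjk =>
    hσ (by rw [← hπ j, ← hπ k, hjk])
  exact ⟨i, .ofBijective π (Finite.injective_iff_bijective.mp π_injective),
    funext fun j => (hπ j).symm⟩

variable {R M N : Type*} [CommRing R] [AddCommGroup M] [Module R M] [AddCommGroup N] [Module R N]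

theorem alternatingMap_mem_of_forall_succAbove_mem {n : ℕ} (f : M [⋀^Fin n]→ₗ[R] N)
    (b : Fin (n + 1) → M) (P : Submodule R N) (hP : ∀ i : Fin (n + 1), f (b ∘ i.succAbove) ∈ P)
    {m : Fin n → M} (hm : ∀ j, m j ∈ Submodule.span R (Set.range b)) : f m ∈ P := by
  have mod_P_eq_zero :
      P.mkQ.compAlternatingMap (f.compLinearMap (Fintype.linearCombination R b)) = 0 := by
    refine (Pi.basisFun R (Fin (n + 1))).ext_alternating fun σ hσ => ?_
    obtain ⟨i, π, rfl⟩ := exists_succAbove_comp_perm_of_injective hσ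
    have mem_P : f ((b ∘ i.succAbove) ∘ π) ∈ P := by
      rw [f.map_perm]
      exact P.smul_of_tower_mem _ (hP i)
    simpa [Function.comp_def] using mem_P
  simp only [← Fintype.range_linearCombination, LinearMap.mem_range] at hm
  choose c hc using hm
  obtain rfl : (fun j => Fintype.linearCombination R b (c j)) = m := funext hc
  simpa [Function.comp_def] using DFunLike.congr_fun mod_P_eq_zero c

end AlternatingMap

section TripleCrossProduct

/-- The wedge of three coordinate 1-forms. -/
def form3 (p q r : Fin 8) : V8 [⋀^Fin 3]→ₗ[ℝ] ℝ :=
  Matrix.detRowAlternating.compLinearMap (LinearMap.funLeft ℝ ℝ ![p, q, r])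

theorem form3_apply (p q r : Fin 8) (m : Fin 3 → V8) :
    form3 p q r m =
      m 0 p * (m 1 q * m 2 r - m 1 r * m 2 q) - m 0 q * (m 1 p * m 2 r - m 1 r * m 2 p)
        + m 0 r * (m 1 p * m 2 q - m 1 q * m 2 p) := by
  change Matrix.det (Matrix.of fun i j => m i (![p, q, r] j)) = _
  simp only [Matrix.det_fin_three, Matrix.of_apply, Matrix.cons_val]
  ring

theorem form4_eq_sum_form3 (p q r s : Fin 8) (a b c d : V8) :
    form4 p q r s a b c d =
      d s * form3 p q r ![a, b, c] - d r * form3 p q s ![a, b, c]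
        + d q * form3 p r s ![a, b, c] - d p * form3 q r s ![a, b, c] := by
  rw [form4, Matrix.det_succ_row _ 3]
  simp only [form3_apply, Fin.sum_univ_four, Matrix.det_fin_three, Matrix.submatrix_apply,
    Matrix.of_apply, Matrix.cons_val, Fin.succAbove, Fin.reduceCastSucc, Fin.reduceSucc,
    Fin.reduceLT, Fin.coe_ofNat_eq_mod, reduceIte]
  ring

theorem vecCons_fin_three_eta {α : Type*} (m : Fin 3 → α) : ![m 0, m 1, m 2] = m :=
  FinVec.etaExpand_eq m

/-- The triple cross product `XBS u v` bundled as an alternating map. -/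
def XBSAlternating (u v : ℝ) : V8 [⋀^Fin 3]→ₗ[ℝ] V8 where
  toFun m := XBS u v (m 0) (m 1) (m 2)
  map_update_add' m i x y := by
    ext k
    simp only [XBS, PhiBS, form4_eq_sum_form3, vecCons_fin_three_eta,
      AlternatingMap.map_update_add, Pi.add_apply]
    ring
  map_update_smul' m i c x := by
    ext k
    simp only [XBS, PhiBS, form4_eq_sum_form3, vecCons_fin_three_eta,
      AlternatingMap.map_update_smul, Pi.smul_apply, smul_eq_mul]
    ring
  map_eq_zero_of_eq' m i j hij hne := by
    ext k
    simp [XBS, PhiBS, form4_eq_sum_form3, vecCons_fin_three_eta,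
      AlternatingMap.map_eq_zero_of_eq _ m hij hne]

/-- Closure of a subspace under the triple cross product; for a 4-dimensional subspace this says
that it is Cayley. -/
def IsXBSClosed (u v : ℝ) (S : Submodule ℝ V8) : Prop :=
  ∀ a ∈ S, ∀ b ∈ S, ∀ c ∈ S, XBS u v a b c ∈ S

theorem isXBSClosed_span_range {u v : ℝ} {b : Fin 4 → V8}
    (h012 : XBS u v (b 0) (b 1) (b 2) ∈ Submodule.span ℝ (Set.range b))
    (h013 : XBS u v (b 0) (b 1) (b 3) ∈ Submodule.span ℝ (Set.range b))
    (h023 : XBS u v (b 0) (b 2) (b 3) ∈ Submodule.span ℝ (Set.range b))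
    (h123 : XBS u v (b 1) (b 2) (b 3) ∈ Submodule.span ℝ (Set.range b)) :
    IsXBSClosed u v (Submodule.span ℝ (Set.range b)) := by
  intro x hx y hy z hz
  refine alternatingMap_mem_of_forall_succAbove_mem (XBSAlternating u v) b _ (m := ![x, y, z])
    (fun i => ?_) (fun j => ?_)
  · fin_cases i
    exacts [h123, h023, h013, h012]
  · fin_cases j
    exacts [hx, hy, hz]

end TripleCrossProduct

section GraphFrame

/-- The frame `e₁ + z, e₂ + w, f₁, f₂`, with the plane of `f₃, f₄` identified with `ℂ`. -/
def graphFrame (z w : ℂ) : Fin 4 → V8 :=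
  ![e8 0 + z.re • e8 6 + z.im • e8 7, e8 1 + w.re • e8 6 + w.im • e8 7, e8 4, e8 5]

variable {u v : ℝ} (z w : ℂ)

theorem range_graphFrame :
    Set.range (graphFrame z w) =
      {e8 0 + z.re • e8 6 + z.im • e8 7, e8 1 + w.re • e8 6 + w.im • e8 7, e8 4, e8 5} := by
  simp only [graphFrame, Matrix.range_cons, Matrix.range_empty, Set.union_empty,
    Set.singleton_union]

theorem coord_eq_of_mem_span_range_graphFrame {z w : ℂ} {x : V8}
    (hx : x ∈ Submodule.span ℝ (Set.range (graphFrame z w))) :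
    x 6 = x 0 * z.re + x 1 * w.re ∧ x 7 = x 0 * z.im + x 1 * w.im := by
  obtain ⟨c, rfl⟩ := (Submodule.mem_span_range_iff_exists_fun ℝ).mp hx
  simp [Fin.sum_univ_four, graphFrame, e8]

theorem XBS_graphFrame_zero_two_three (hu : u ≠ 0) (hv : v ≠ 0) :
    XBS u v (graphFrame z w 0) (graphFrame z w 2) (graphFrame z w 3) =
      v ^ 2 • graphFrame z (I * z) 1 := by
  ext k
  fin_cases k <;> simp [XBS, PhiBS, form4_eq_sum_form3, form3_apply, graphFrame, e8] <;> field_simp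

theorem XBS_graphFrame_one_two_three (hu : u ≠ 0) (hv : v ≠ 0) :
    XBS u v (graphFrame z w 1) (graphFrame z w 2) (graphFrame z w 3) =
      -v ^ 2 • graphFrame (-I * w) w 0 := by
  ext k
  fin_cases k <;> simp [XBS, PhiBS, form4_eq_sum_form3, form3_apply, graphFrame, e8] <;> field_simp

theorem XBS_graphFrame_zero_one_two (hv : v ≠ 0) :
    XBS u v (graphFrame z (I * z) 0) (graphFrame z (I * z) 1) (graphFrame z (I * z) 2) =
      (u ^ 2 + v ^ 2 * Complex.normSq z) • graphFrame z (I * z) 3 := by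
  ext k
  fin_cases k <;> simp [XBS, PhiBS, form4_eq_sum_form3, form3_apply, graphFrame, e8,
    Complex.normSq_apply]
  field_simp

theorem XBS_graphFrame_zero_one_three (hv : v ≠ 0) :
    XBS u v (graphFrame z (I * z) 0) (graphFrame z (I * z) 1) (graphFrame z (I * z) 3) =
      -(u ^ 2 + v ^ 2 * Complex.normSq z) • graphFrame z (I * z) 2 := by
  ext k
  fin_cases k <;> simp [XBS, PhiBS, form4_eq_sum_form3, form3_apply, graphFrame, e8,
    Complex.normSq_apply]
  field_simp
  ring

theorem isXBSClosed_span_range_graphFrame_iff (hu : u ≠ 0) (hv : v ≠ 0) :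
    IsXBSClosed u v (Submodule.span ℝ (Set.range (graphFrame z w))) ↔ w = I * z := by
  have mem_span (z w : ℂ) (i : Fin 4) :
      graphFrame z w i ∈ Submodule.span ℝ (Set.range (graphFrame z w)) :=
    Submodule.subset_span (Set.mem_range_self i)
  constructor
  · intro hclosed
    have hmem := hclosed _ (mem_span z w 0) _ (mem_span z w 2) _ (mem_span z w 3)
    rw [XBS_graphFrame_zero_two_three z w hu hv,
      Submodule.smul_mem_iff _ (pow_ne_zero 2 hv)] at hmem
    obtain ⟨hre, him⟩ := coord_eq_of_mem_span_range_graphFrame hmem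
    apply Complex.ext
    · simpa [graphFrame, e8] using hre.symm
    · simpa [graphFrame, e8] using him.symm
  · rintro rfl
    have neg_I_mul_I_mul : -I * (I * z) = z := by
      rw [← mul_assoc, neg_mul, Complex.I_mul_I, neg_neg, one_mul]
    apply isXBSClosed_span_range
    · rw [XBS_graphFrame_zero_one_two z hv]
      exact Submodule.smul_mem _ _ (mem_span _ _ 3)
    · rw [XBS_graphFrame_zero_one_three z hv]
      exact Submodule.smul_mem _ _ (mem_span _ _ 2)
    · rw [XBS_graphFrame_zero_two_three z _ hu hv]
      exact Submodule.smul_mem _ _ (mem_span _ _ 1)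
    · rw [XBS_graphFrame_one_two_three z _ hu hv, neg_I_mul_I_mul]
      exact Submodule.smul_mem _ _ (mem_span _ _ 0)

end GraphFrame

section SpinorSubbundle

/-- The tangent space `span {E₁, E₂, F₁, F₂}` of the subbundle `𝒮⁻⁺` at the point with fibre
coordinates `(t1, t2)`, over a surface with second fundamental form `Aljk` (for `A^l_{jk}`). -/
def spinorTangentSpace (A111 A112 A122 A211 A212 A222 t1 t2 : ℝ) : Submodule ℝ V8 :=
  Submodule.span ℝ
    {e8 0 + (t1 / 2) • ((-A111 - A212) • e8 6 + (-A211 + A112) • e8 7)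
        + (t2 / 2) • ((A211 - A112) • e8 6 + (-A111 - A212) • e8 7),
      e8 1 + (t1 / 2) • ((-A112 - A222) • e8 6 + (-A212 + A122) • e8 7)
        + (t2 / 2) • ((A212 - A122) • e8 6 + (-A112 - A222) • e8 7),
      e8 4, e8 5}

variable (A111 A112 A122 A211 A212 A222 t1 t2 : ℝ)

theorem spinorTangentSpace_eq_span_range_graphFrame :
    spinorTangentSpace A111 A112 A122 A211 A212 A222 t1 t2 =
      Submodule.span ℝ (Set.range (graphFrame (-⟨t1, t2⟩ / 2 * ⟨A111 + A212, A211 - A112⟩)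
        (-⟨t1, t2⟩ / 2 * ⟨A112 + A222, A212 - A122⟩))) := by
  rw [spinorTangentSpace, range_graphFrame]
  congr 2
  · simp only [Complex.mul_re, Complex.mul_im, Complex.div_ofNat_re, Complex.div_ofNat_im,
      Complex.neg_re, Complex.neg_im]
    module
  · congr 1
    simp only [Complex.mul_re, Complex.mul_im, Complex.div_ofNat_re, Complex.div_ofNat_im,
      Complex.neg_re, Complex.neg_im]
    module

theorem stmt15_general {u v : ℝ} (hu : u ≠ 0) (hv : v ≠ 0) :
    IsXBSClosed u v (spinorTangentSpace A111 A112 A122 A211 A212 A222 t1 t2) ↔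
      (t1 = 0 ∧ t2 = 0) ∨ (A111 + A122 = 0 ∧ A211 + A222 = 0) := by
  have defect_eq :
      -⟨t1, t2⟩ / 2 * ⟨A112 + A222, A212 - A122⟩
          - I * (-⟨t1, t2⟩ / 2 * ⟨A111 + A212, A211 - A112⟩) =
        (-⟨t1, t2⟩ / 2 * ⟨A211 + A222, -(A111 + A122)⟩ : ℂ) := by
    apply Complex.ext <;> simp <;> ring
  rw [spinorTangentSpace_eq_span_range_graphFrame,
    isXBSClosed_span_range_graphFrame_iff _ _ hu hv, ← sub_eq_zero, defect_eq, mul_eq_zero,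
    div_eq_zero_iff, neg_eq_zero, or_iff_left two_ne_zero]
  simp only [Complex.ext_iff, Complex.zero_re, Complex.zero_im, neg_eq_zero]
  rw [and_comm (a := A211 + A222 = 0)]

end SpinorSubbundle

theorem stmt15 (u v : ℝ) (hu : 0 < u) (hv : 0 < v)
    (A111 A112 A122 A211 A212 A222 : ℝ) :
    (∀ t1 t2 : ℝ, ∀ S : Submodule ℝ V8,
      S = Submodule.span ℝ
        ({e8 0 + (t1 / 2) • ((-A111 - A212) • e8 6 + (-A211 + A112) • e8 7)
              + (t2 / 2) • ((A211 - A112) • e8 6 + (-A111 - A212) • e8 7),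
          e8 1 + (t1 / 2) • ((-A112 - A222) • e8 6 + (-A212 + A122) • e8 7)
              + (t2 / 2) • ((A212 - A122) • e8 6 + (-A112 - A222) • e8 7),
          e8 4, e8 5} : Set V8) →
      ∀ a ∈ S, ∀ b ∈ S, ∀ c ∈ S, XBS u v a b c ∈ S)
    ↔ (A111 + A122 = 0 ∧ A211 + A222 = 0) := by
  constructor
  · intro hclosed
    simpa using (stmt15_general A111 A112 A122 A211 A212 A222 1 0 hu.ne' hv.ne').mp
      (hclosed 1 0 _ rfl)
  · rintro hminimal t1 t2 S rfl
    exact (stmt15_general _ _ _ _ _ _ t1 t2 hu.ne' hv.ne').mpr (.inr hminimal)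
end
end

section
/- Let V and W be 4-dimensional subspaces of ℝ⁸, each closed under the triple cross product (X(a,b,c) ∈ V for all a, b, c ∈ V, and likewise for W). Then dim(V ∩ W) ≠ 3. -/
noncomputable section

/-!
Let `a, b, c` be a basis of a three-dimensional subspace `S` closed under the triple cross product
`X`. Then `X(a, b, c)` lies in `S`; being orthogonal to `a`, `b` and `c`, it is orthogonal to
itself and vanishes. On the other hand, for the octonion product on `ℝ⁸`,
`(a b̄) c = X(a, b, c) + ⟨a, b⟩ c - ⟨a, c⟩ b + ⟨b, c⟩ a`.
Since the octonion norm is multiplicative, `|X(a, b, c)|²` is the Gram determinant of `a, b, c`,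
which is nonzero. The intersection of two Cayley planes is closed under `X`, hence not
three-dimensional.
-/

open Matrix

theorem det_mul_transpose_ne_zero_of_linearIndependent_row {m n K : Type*} [Fintype m]
    [DecidableEq m] [Fintype n] [Field K] [LinearOrder K] [IsStrictOrderedRing K]
    {A : Matrix m n K} (hA : LinearIndependent K A.row) : (A * Aᵀ).det ≠ 0 := by
  have rank_eq : (A * Aᵀ).rank = Fintype.card m := by
    rw [rank_self_mul_transpose, hA.rank_matrix]
  rw [rank_eq_finrank_span_row] at rank_eq
  rw [← isUnit_iff_ne_zero, ← isUnit_iff_isUnit_det, ← linearIndependent_rows_iff_isUnit]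
  exact linearIndependent_iff_card_eq_finrank_span.mpr rank_eq.symm

theorem form4_eq_sum_minor_mul_minor (p q r s : Fin 8) (a b c d : V8) :
    form4 p q r s a b c d =
    (a p * b q - a q * b p) * (c r * d s - c s * d r)
    - (a p * b r - a r * b p) * (c q * d s - c s * d q)
    + (a p * b s - a s * b p) * (c q * d r - c r * d q)
    + (a q * b r - a r * b q) * (c p * d s - c s * d p)
    - (a q * b s - a s * b q) * (c p * d r - c r * d p)
    + (a r * b s - a s * b r) * (c p * d q - c q * d p) := by
  simp only [form4, det_succ_row_zero (n := 3), Fin.sum_univ_four, det_fin_three, submatrix_apply,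
    of_apply, Fin.succAbove, Fin.reduceSucc, Fin.reduceCastSucc, Fin.reduceLT,
    Fin.coe_ofNat_eq_mod, if_true, if_false, cons_val]
  ring

theorem form4_dotProduct (p q r s : Fin 8) (a b c d : V8) :
    (fun k ↦ form4 p q r s a b c (e8 k)) ⬝ᵥ d = form4 p q r s a b c d := by
  have sum_e8_mul (i : Fin 8) : ∑ k, e8 k i * d k = d i := by simp [e8]
  simp only [form4_eq_sum_minor_mul_minor, dotProduct]
  rw [← sum_e8_mul p, ← sum_e8_mul q, ← sum_e8_mul r, ← sum_e8_mul s]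
  simp only [Fin.sum_univ_eight]
  ring

theorem form4_apply_last_eq_zero (p q r s : Fin 8) (v : Fin 3 → V8) (i : Fin 3) :
    form4 p q r s (v 0) (v 1) (v 2) (v i) = 0 :=
  det_zero_of_row_eq (Fin.castSucc_lt_last i).ne (by fin_cases i <;> rfl)

theorem X8_dotProduct_apply_eq_zero (v : Fin 3 → V8) (i : Fin 3) :
    X8 (v 0) (v 1) (v 2) ⬝ᵥ v i = 0 := by
  simp [X8_dotProduct, Phi8, form4_apply_last_eq_zero]

/-- The octonion product on `ℝ⁸` with unit `e8 0`, in the convention matching `Phi8`. Its table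
is read off from `octMul a c = X8 a (e8 0) c + a 0 • c + c 0 • a - (a ⬝ᵥ c) • e8 0`, the case
`b = e8 0` of `octMul_octMul_octConj`. -/
def octMul (a b : V8) : V8 :=
  ![a 0 * b 0 - a 1 * b 1 - a 2 * b 2 - a 3 * b 3 - a 4 * b 4 - a 5 * b 5 - a 6 * b 6 - a 7 * b 7,
    a 0 * b 1 + a 1 * b 0 - a 2 * b 3 + a 3 * b 2 - a 4 * b 5 + a 5 * b 4 + a 6 * b 7 - a 7 * b 6,
    a 0 * b 2 + a 1 * b 3 + a 2 * b 0 - a 3 * b 1 - a 4 * b 6 - a 5 * b 7 + a 6 * b 4 + a 7 * b 5,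
    a 0 * b 3 - a 1 * b 2 + a 2 * b 1 + a 3 * b 0 - a 4 * b 7 + a 5 * b 6 - a 6 * b 5 + a 7 * b 4,
    a 0 * b 4 + a 1 * b 5 + a 2 * b 6 + a 3 * b 7 + a 4 * b 0 - a 5 * b 1 - a 6 * b 2 - a 7 * b 3,
    a 0 * b 5 - a 1 * b 4 + a 2 * b 7 - a 3 * b 6 + a 4 * b 1 + a 5 * b 0 + a 6 * b 3 - a 7 * b 2,
    a 0 * b 6 - a 1 * b 7 - a 2 * b 4 + a 3 * b 5 + a 4 * b 2 - a 5 * b 3 + a 6 * b 0 + a 7 * b 1,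
    a 0 * b 7 + a 1 * b 6 - a 2 * b 5 - a 3 * b 4 + a 4 * b 3 + a 5 * b 2 - a 6 * b 1 + a 7 * b 0]

/-- The octonion conjugate, negating the coordinates orthogonal to the unit `e8 0`. -/
def octConj (a : V8) : V8 := ![a 0, -a 1, -a 2, -a 3, -a 4, -a 5, -a 6, -a 7]

theorem octConj_dotProduct_self (a : V8) : octConj a ⬝ᵥ octConj a = a ⬝ᵥ a := by
  simp [octConj, dotProduct, Fin.sum_univ_eight]

theorem octMul_dotProduct_self (a b : V8) :
    octMul a b ⬝ᵥ octMul a b = (a ⬝ᵥ a) * (b ⬝ᵥ b) := by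
  simp only [octMul, dotProduct, Fin.sum_univ_eight, cons_val]
  ring

theorem octMul_octMul_octConj_dotProduct (a b c d : V8) :
    octMul (octMul a (octConj b)) c ⬝ᵥ d =
      Phi8 a b c d + ((a ⬝ᵥ b) * (c ⬝ᵥ d) - (a ⬝ᵥ c) * (b ⬝ᵥ d) + (b ⬝ᵥ c) * (a ⬝ᵥ d)) := by
  simp only [octMul, octConj, Phi8, form4_eq_sum_minor_mul_minor, dotProduct, Fin.sum_univ_eight,
    cons_val]
  ring

theorem octMul_octMul_octConj (a b c : V8) :
    octMul (octMul a (octConj b)) c =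
      X8 a b c + ((a ⬝ᵥ b) • c - (a ⬝ᵥ c) • b + (b ⬝ᵥ c) • a) := by
  refine dotProduct_eq _ _ fun d ↦ ?_
  simp only [octMul_octMul_octConj_dotProduct, X8_dotProduct, add_dotProduct, sub_dotProduct,
    smul_dotProduct, smul_eq_mul]

theorem X8_dotProduct_self (a b c : V8) :
    X8 a b c ⬝ᵥ X8 a b c =
      (a ⬝ᵥ a) * (b ⬝ᵥ b) * (c ⬝ᵥ c) + 2 * (a ⬝ᵥ b) * (a ⬝ᵥ c) * (b ⬝ᵥ c)
        - (a ⬝ᵥ b) ^ 2 * (c ⬝ᵥ c) - (a ⬝ᵥ c) ^ 2 * (b ⬝ᵥ b) - (b ⬝ᵥ c) ^ 2 * (a ⬝ᵥ a) := by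
  set p := (a ⬝ᵥ b) • c - (a ⬝ᵥ c) • b + (b ⬝ᵥ c) • a with hp
  have X8_dotProduct_p : X8 a b c ⬝ᵥ p = 0 := by
    have ortho := X8_dotProduct_apply_eq_zero ![a, b, c]
    obtain ⟨ha, hb, hc⟩ : X8 a b c ⬝ᵥ a = 0 ∧ X8 a b c ⬝ᵥ b = 0 ∧ X8 a b c ⬝ᵥ c = 0 :=
      ⟨ortho 0, ortho 1, ortho 2⟩
    simp [hp, dotProduct_add, dotProduct_sub, dotProduct_smul, ha, hb, hc]
  have p_dotProduct_self : p ⬝ᵥ p = (a ⬝ᵥ b) ^ 2 * (c ⬝ᵥ c) + (a ⬝ᵥ c) ^ 2 * (b ⬝ᵥ b)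
      + (b ⬝ᵥ c) ^ 2 * (a ⬝ᵥ a) - 2 * (a ⬝ᵥ b) * (a ⬝ᵥ c) * (b ⬝ᵥ c) := by
    simp only [hp, dotProduct_add, dotProduct_sub, dotProduct_smul, add_dotProduct,
      sub_dotProduct, smul_dotProduct, smul_eq_mul, dotProduct_comm b a, dotProduct_comm c a,
      dotProduct_comm c b]
    ring
  have pythagoras : X8 a b c ⬝ᵥ X8 a b c + p ⬝ᵥ p = (a ⬝ᵥ a) * (b ⬝ᵥ b) * (c ⬝ᵥ c) :=
    calc X8 a b c ⬝ᵥ X8 a b c + p ⬝ᵥ p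
      _ = (X8 a b c + p) ⬝ᵥ (X8 a b c + p) := by
        simp [dotProduct_add, add_dotProduct, dotProduct_comm p, X8_dotProduct_p]
      _ = (a ⬝ᵥ a) * (b ⬝ᵥ b) * (c ⬝ᵥ c) := by
        rw [← octMul_octMul_octConj, octMul_dotProduct_self, octMul_dotProduct_self,
          octConj_dotProduct_self]
  linear_combination pythagoras - p_dotProduct_self

theorem X8_dotProduct_self_eq_det_gram (v : Fin 3 → V8) :
    X8 (v 0) (v 1) (v 2) ⬝ᵥ X8 (v 0) (v 1) (v 2) = (of v * (of v)ᵀ).det := by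
  have gram_apply (i j : Fin 3) : (of v * (of v)ᵀ) i j = v i ⬝ᵥ v j := rfl
  simp only [det_fin_three, gram_apply, dotProduct_comm (v 1) (v 0), dotProduct_comm (v 2) (v 0),
    dotProduct_comm (v 2) (v 1)]
  linear_combination X8_dotProduct_self (v 0) (v 1) (v 2)

theorem X8_ne_zero_of_linearIndependent {v : Fin 3 → V8} (hv : LinearIndependent ℝ v) :
    X8 (v 0) (v 1) (v 2) ≠ 0 := by
  intro X8_eq_zero
  apply det_mul_transpose_ne_zero_of_linearIndependent_row (A := of v) hv
  rw [← X8_dotProduct_self_eq_det_gram, X8_eq_zero, zero_dotProduct]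

theorem X8_notMem_span_of_linearIndependent {v : Fin 3 → V8} (hv : LinearIndependent ℝ v) :
    X8 (v 0) (v 1) (v 2) ∉ Submodule.span ℝ (Set.range v) := by
  rw [Submodule.mem_span_range_iff_exists_fun]
  rintro ⟨r, hr⟩
  refine X8_ne_zero_of_linearIndependent hv (dotProduct_self_eq_zero.mp ?_)
  nth_rw 2 [← hr]
  simp [dotProduct_sum, dotProduct_smul, X8_dotProduct_apply_eq_zero]

theorem stmt17_general (S : Submodule ℝ V8)
    (hS : ∀ a ∈ S, ∀ b ∈ S, ∀ c ∈ S, X8 a b c ∈ S) : Module.finrank ℝ S ≠ 3 := by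
  intro finrank_eq
  let B := Module.finBasisOfFinrankEq ℝ S finrank_eq
  have hv : LinearIndependent ℝ (S.subtype ∘ B) := B.linearIndependent.map' _ S.ker_subtype
  have span_eq : Submodule.span ℝ (Set.range (S.subtype ∘ B)) = S := by
    rw [Set.range_comp, Submodule.span_image, B.span_eq, Submodule.map_subtype_top]
  apply X8_notMem_span_of_linearIndependent hv
  rw [span_eq]
  exact hS _ (B 0).2 _ (B 1).2 _ (B 2).2

/-- two Cayley 4-planes in ℝ⁸ (4-dimensional subspaces closed
    under the triple cross product) cannot intersect in dimension 3. -/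
theorem stmt17 (V W : Submodule ℝ V8)
    (hV4 : Module.finrank ℝ V = 4) (hW4 : Module.finrank ℝ W = 4)
    (hV : ∀ a ∈ V, ∀ b ∈ V, ∀ c ∈ V, X8 a b c ∈ V)
    (hW : ∀ a ∈ W, ∀ b ∈ W, ∀ c ∈ W, X8 a b c ∈ W) :
    Module.finrank ℝ ↥(V ⊓ W) ≠ 3 := by
  exact stmt17_general (V ⊓ W) fun a ha b hb c hc ↦
    ⟨hV a ha.1 b hb.1 c hc.1, hW a ha.2 b hb.2 c hc.2⟩
end
end
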